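/- Let j ≥ 0 be a real number. The function u(x) = x₅^{j+1} · ‖x‖^{−(2j+5)} on Ω = {x ∈ ℝ⁵ : x₅ > 0} satisfies Σ_{i=1}^{5} ∂²u/∂x_i² = j(j+1) · x₅^{−2} · u on Ω. (In polar form u = cos^{j+1}ψ · r^{−(j+4)}: fluctuations around the Nahm pole solution of the five-dimensional equations decay as r^{−4−j}, exactly one extra power of 1/r compared to the four-dimensional case.) -/

import Mathlib

/-- Partial derivative in the `i`-th coordinate direction of a real-valued function on `ℝᵈ`. -/
noncomputable def pdR {d : ℕ} (i : Fin d) (f : (Fin d → ℝ) → ℝ) (x : Fin d → ℝ) : ℝ :=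
  deriv (fun t => f (Function.update x i t)) (x i)

/-- The product `x_k ^ p * ‖x‖ ^ (2 * q)` of powers of a coordinate and of the Euclidean norm. -/
noncomputable def coordNormPow {d : ℕ} (k : Fin d) (p q : ℝ) (x : Fin d → ℝ) : ℝ :=
  x k ^ p * (∑ i, x i ^ 2) ^ q

lemma sum_sq_pos {d : ℕ} {k : Fin d} {x : Fin d → ℝ} (hx : 0 < x k) : 0 < ∑ i, x i ^ 2 :=
  Finset.sum_pos' (fun i _ => sq_nonneg (x i)) ⟨k, Finset.mem_univ k, by positivity⟩

lemma hasDerivAt_update_apply {d : ℕ} (i k : Fin d) (x : Fin d → ℝ) (t : ℝ) :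
    HasDerivAt (fun s => Function.update x i s k) (if i = k then 1 else 0) t := by
  by_cases h : i = k
  · subst h
    simpa using hasDerivAt_id' t
  · simpa [h, Function.update_of_ne (Ne.symm h)] using hasDerivAt_const t (x k)

lemma hasDerivAt_sum_sq_update {d : ℕ} (i : Fin d) (x : Fin d → ℝ) :
    HasDerivAt (fun s => ∑ l, Function.update x i s l ^ 2) (2 * x i) (x i) := by
  have h := HasDerivAt.fun_sum (u := Finset.univ)
    fun l _ => (hasDerivAt_update_apply i l x (x i)).fun_pow 2
  simpa using h

lemma hasDerivAt_coordNormPow_update {d : ℕ} (i k : Fin d) (p q : ℝ) {x : Fin d → ℝ}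
    (hx : 0 < x k) :
    HasDerivAt (fun s => coordNormPow k p q (Function.update x i s))
      ((if i = k then 1 else 0) * p * coordNormPow k (p - 1) q x
        + 2 * q * x i * coordNormPow k p (q - 1) x) (x i) := by
  have h₁ := (hasDerivAt_update_apply i k x (x i)).rpow_const (p := p)
    (Or.inl (by simpa using hx.ne'))
  have h₂ := (hasDerivAt_sum_sq_update i x).rpow_const (p := q)
    (Or.inl (by simpa using (sum_sq_pos hx).ne'))
  refine (h₁.mul h₂).congr_deriv ?_
  simp only [Function.update_eq_self, coordNormPow]
  ring

lemma pdR_congr_of_pos {d : ℕ} (i k : Fin d) {f g : (Fin d → ℝ) → ℝ}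
    (hfg : ∀ y, 0 < y k → f y = g y) {x : Fin d → ℝ} (hx : 0 < x k) :
    pdR i f x = pdR i g x := by
  refine Filter.EventuallyEq.deriv_eq ?_
  have hc := (hasDerivAt_update_apply i k x (x i)).continuousAt
  filter_upwards [hc.eventually (lt_mem_nhds (by simpa using hx))] with t ht
  exact hfg _ ht

lemma pdR_pdR_coordNormPow {d : ℕ} (i k : Fin d) (p q : ℝ) {x : Fin d → ℝ} (hx : 0 < x k) :
    pdR i (pdR i (coordNormPow k p q)) x =
      (if i = k then p * (p - 1) * coordNormPow k (p - 2) q x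
        + 4 * p * q * (x k * coordNormPow k (p - 1) (q - 1) x) else 0)
      + 2 * q * coordNormPow k p (q - 1) x
      + 4 * q * (q - 1) * coordNormPow k p (q - 2) x * x i ^ 2 := by
  refine (pdR_congr_of_pos i k
    (fun y hy => (hasDerivAt_coordNormPow_update i k p q hy).deriv) hx).trans ?_
  have h₁ := (hasDerivAt_coordNormPow_update i k (p - 1) q hx).const_mul
    ((if i = k then 1 else 0) * p)
  have h₂ := ((hasDerivAt_update_apply i i x (x i)).const_mul (2 * q)).mul
    (hasDerivAt_coordNormPow_update i k p (q - 1) hx)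
  refine (h₁.add h₂).deriv.trans ?_
  rw [show p - 1 - 1 = p - 2 by ring, show q - 1 - 1 = q - 2 by ring, if_pos rfl,
    Function.update_eq_self]
  split_ifs with h
  · subst h
    ring
  · ring

/-- The Laplacian of `x_k ^ p * ‖x‖ ^ (2 * q)` on the half-space `0 < x_k` of `ℝᵈ`. -/
lemma sum_pdR_pdR_coordNormPow {d : ℕ} (k : Fin d) (p q : ℝ) {x : Fin d → ℝ} (hx : 0 < x k) :
    ∑ i, pdR i (pdR i (coordNormPow k p q)) x =
      p * (p - 1) * coordNormPow k (p - 2) q x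
      + 2 * q * (2 * p + 2 * q + d - 2) * coordNormPow k p (q - 1) x := by
  have hk : x k * coordNormPow k (p - 1) (q - 1) x = coordNormPow k p (q - 1) x := by
    rw [coordNormPow, coordNormPow, Real.rpow_sub_one hx.ne']
    field_simp
  have hS : coordNormPow k p (q - 2) x * ∑ i, x i ^ 2 = coordNormPow k p (q - 1) x := by
    have hpos := sum_sq_pos hx
    rw [coordNormPow, coordNormPow, show q - 2 = q - 1 - 1 by ring,
      Real.rpow_sub_one hpos.ne' (q - 1)]
    field_simp
  simp only [pdR_pdR_coordNormPow _ k p q hx, Finset.sum_add_distrib, Finset.sum_ite_eq',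
    Finset.mem_univ, if_true, ← Finset.mul_sum, Finset.sum_const, Finset.card_univ,
    Fintype.card_fin, nsmul_eq_mul, hk]
  linear_combination 4 * q * (q - 1) * hS

/-- For `j ≥ 0`, the function `u(x) = x₅^{j+1} ‖x‖^{−(2j+5)}` on the half-space `x₅ > 0`
in `ℝ⁵` satisfies `Σᵢ ∂²u/∂xᵢ² = j(j+1) x₅⁻² u`. Fluctuations around the Nahm pole
solution of the five-dimensional equations decay as `r^{−4−j}`, one extra power of `1/r`
compared to the four-dimensional case. -/
theorem five_dim_decay_mode (j : ℝ) (hj : 0 ≤ j)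
    (u : (Fin 5 → ℝ) → ℝ)
    (hu : ∀ x, u x = (x 4) ^ (j + 1) * (Real.sqrt (∑ i, x i ^ 2)) ^ (-(2 * j + 5))) :
    ∀ x : Fin 5 → ℝ, 0 < x 4 →
      ∑ i, pdR i (pdR i u) x = j * (j + 1) * ((x 4) ^ 2)⁻¹ * u x := by
  intro x hx
  have hu' : u = coordNormPow 4 (j + 1) (-(2 * j + 5) / 2) := by
    funext y
    rw [hu, coordNormPow, Real.sqrt_eq_rpow,
      ← Real.rpow_mul (Finset.sum_nonneg fun i _ => sq_nonneg (y i))]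
    ring_nf
  have hsub : coordNormPow 4 (j + 1 - 2) (-(2 * j + 5) / 2) x = (x 4 ^ 2)⁻¹ * u x := by
    rw [hu', coordNormPow, coordNormPow, Real.rpow_sub hx, Real.rpow_two]
    ring
  rw [hu', sum_pdR_pdR_coordNormPow 4 _ _ hx, hsub, hu']
  push_cast
  ring
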